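/- arXiv:2310.16674 — 2 statements merged into one kernel-verified Lean document; each statement's English description precedes it below -/
import Mathlib

section
/- Let m ∈ ℕ, n ≥ m+1 and α ∈ ℝ. For every x ∈ ℝ, lim_{β→∞} β^{n} P̂^{(III,m)}_n(1 − 2x/β; α, β) = (−2)^{n} L̂^{(III,m)}_n(x; α), the limit being taken along real β → +∞ (for all sufficiently large β all occurring polynomials are defined). -/
open Finset Filter Topology

/-- Monic Laguerre polynomial `L_n^{(α)}(x)`. -/
noncomputable def lagP (n : ℕ) (α x : ℝ) : ℝ :=
  ∑ k ∈ Finset.range (n + 1),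
    (-1 : ℝ) ^ (n - k) * ((n.factorial : ℝ) / (k.factorial : ℝ)) *
      ((∏ j ∈ Finset.Icc (k + 1) n, (α + (j : ℝ))) / ((n - k).factorial : ℝ)) * x ^ k

/-- Pochhammer symbol `(a)_n = a (a+1) ⋯ (a+n−1)`. -/
noncomputable def poch (a : ℝ) (n : ℕ) : ℝ := ∏ j ∈ Finset.range n, (a + (j : ℝ))

/-- Monic Jacobi polynomial `P_n^{(α,β)}(x)`. -/
noncomputable def jacP (n : ℕ) (α β x : ℝ) : ℝ :=
  (2 ^ n * (n.factorial : ℝ) / poch ((n : ℝ) + α + β + 1) n) *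
    ∑ s ∈ Finset.range (n + 1),
      ((∏ j ∈ Finset.Icc (s + 1) n, (α + (j : ℝ))) / ((n - s).factorial : ℝ)) *
        ((∏ j ∈ Finset.Icc (n - s + 1) n, (β + (j : ℝ))) / (s.factorial : ℝ)) *
        ((x - 1) / 2) ^ s * ((x + 1) / 2) ^ (n - s)

/-- Monic Hermite polynomial, as a polynomial function on `ℂ`. -/
noncomputable def hermC (n : ℕ) (z : ℂ) : ℂ :=
  ∑ k ∈ Finset.range (n / 2 + 1),
    (-1 : ℂ) ^ k *
      ((n.factorial : ℂ) / ((k.factorial : ℂ) * ((n - 2 * k).factorial : ℂ) * 4 ^ k)) *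
      z ^ (n - 2 * k)

/-- Type I `X_m`-Laguerre exceptional orthogonal polynomial `L̂^{(I,m)}_n(x;α)`. -/
noncomputable def lagI (m n : ℕ) (α x : ℝ) : ℝ :=
  (-1 : ℝ) ^ m * (lagP m (α + 1) (-x) * lagP n α x
    - (n : ℝ) * lagP m α (-x) * lagP (n - 1) (α + 1) x)

/-- Type II `X_m`-Laguerre exceptional orthogonal polynomial `L̂^{(II,m)}_n(x;α)`. -/
noncomputable def lagII (m n : ℕ) (α x : ℝ) : ℝ :=
  (1 / (α + (n : ℝ) - (m : ℝ))) *
    ((n : ℝ) * x * lagP m (-α) x * lagP (n - 1) (α + 1) x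
      - ((m : ℝ) - α) * lagP m (-α - 1) x * lagP n α x)

/-- Type III `X_m`-Laguerre exceptional orthogonal polynomial `L̂^{(III,m)}_n(x;α)`. -/
noncomputable def lagIII (m n : ℕ) (α x : ℝ) : ℝ :=
  if n = 0 then 1 else
    (-1 : ℝ) ^ m * (lagP m (-α) (-x) * lagP (n - m) (α - 1) x
      - (m : ℝ) * x * lagP (m - 1) (-α + 1) (-x) * lagP (n - m - 1) α x)

/-- Type I `X_m`-Jacobi exceptional orthogonal polynomial `P̂^{(I,m)}_n(x;α,β)`. -/
noncomputable def jacI (m n : ℕ) (α β x : ℝ) : ℝ :=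
  (1 / (β + (n : ℝ) - (m : ℝ))) *
    (jacP m α (-β) x * ((n : ℝ) * (1 + x) * jacP (n - 1) (α + 1) (β + 1) x
        + β * jacP n α β x)
      - (m : ℝ) * (1 + x) * jacP (m - 1) (α + 1) (-β + 1) x * jacP n α β x)

/-- Type II `X_m`-Jacobi exceptional orthogonal polynomial `P̂^{(II,m)}_n(x;α,β)`. -/
noncomputable def jacII (m n : ℕ) (α β x : ℝ) : ℝ :=
  (1 / ((m : ℝ) - (n : ℝ) - α)) *
    (jacP m (-α) β x * ((n : ℝ) * (1 - x) * jacP (n - 1) (α + 1) (β + 1) x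
        - α * jacP n α β x)
      - (m : ℝ) * (1 - x) * jacP (m - 1) (-α + 1) (β + 1) x * jacP n α β x)

/-- Type III `X_m`-Jacobi exceptional orthogonal polynomial `P̂^{(III,m)}_n(x;α,β)`. -/
noncomputable def jacIII (m n : ℕ) (α β x : ℝ) : ℝ :=
  if n = 0 then 1 else
    (1 / (α + β + (n : ℝ) - 2 * (m : ℝ) - 1)) *
      ((α + β + (n : ℝ) - (m : ℝ) - 1) * jacP m (-α) (-β) x * jacP (n - m) (α - 1) (β - 1) x
        + (m : ℝ) * (1 - x ^ 2) * jacP (m - 1) (-α + 1) (-β + 1) x * jacP (n - m - 1) α β x)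

/-- Type III `X_m`-Hermite exceptional orthogonal polynomial `Ĥ^{(III,m)}_n(x)`
(a real polynomial, expressed via complex Hermite values). -/
noncomputable def hermIII (m n : ℕ) (x : ℝ) : ℂ :=
  if n = 0 then 1 else
    Complex.I ^ m * (hermC m (Complex.I * x) * hermC (n - m) (x : ℂ)
      + Complex.I * ((m : ℂ) / 2) * hermC (m - 1) (Complex.I * x) * hermC (n - m - 1) (x : ℂ))

/-!
Put `y = x / β`. In `P_k^{(a,b)}(1 - 2 y)` the `s`-th summand carries `s` factors linear in `b` and
a power `(-y)^s`, and the normalising Pochhammer symbol has `k` factors linear in `b`. When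
`b / β → e ≠ 0`, multiplying by `β ^ k` therefore makes every summand converge, and the limit is
`(-2 / e) ^ k L_k^{(a)}(e x)`. The four Jacobi polynomials in `P̂^{(III,m)}_n` have `e = ±1`. Those
in its second summand absorb only `β ^ (n - 2)`; the other two powers go to the prefactor
`1 / (α + β + n - 2 m - 1)` and to `1 - (1 - 2 y) ^ 2 = 4 y (1 - y)`.
-/

open Bornology

section LinearFactors

variable {ι κ 𝕜 : Type*} [NormedField 𝕜] {l : Filter ι} {b t : ι → 𝕜} {e : 𝕜}

lemma tendsto_const_div_cobounded (ht : Tendsto t l (cobounded 𝕜)) (c : 𝕜) :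
    Tendsto (fun i => c / t i) l (𝓝 0) := by
  simpa [div_eq_mul_inv] using (tendsto_inv₀_cobounded.comp ht).const_mul c

lemma tendsto_one_sub_const_div (ht : Tendsto t l (cobounded 𝕜)) (c : 𝕜) :
    Tendsto (fun i => 1 - c / t i) l (𝓝 1) := by
  simpa only [sub_zero] using (tendsto_const_div_cobounded ht c).const_sub 1

lemma tendsto_add_const_div (ht : Tendsto t l (cobounded 𝕜))
    (hb : Tendsto (fun i => b i / t i) l (𝓝 e)) (c : 𝕜) :
    Tendsto (fun i => (b i + c) / t i) l (𝓝 e) := by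
  simpa only [add_div, add_zero] using hb.add (tendsto_const_div_cobounded ht c)

lemma tendsto_prod_add_div_pow_card (ht : Tendsto t l (cobounded 𝕜))
    (hb : Tendsto (fun i => b i / t i) l (𝓝 e)) (s : Finset κ) (c : κ → 𝕜) :
    Tendsto (fun i => (∏ j ∈ s, (b i + c j)) / t i ^ #s) l (𝓝 (e ^ #s)) := by
  simpa only [prod_div_distrib, prod_const] using
    tendsto_finsetProd s fun j _ => tendsto_add_const_div ht hb (c j)

end LinearFactors

/-- The sum `∑ₛ C(n+α, n-s) (c s / s!) y ^ s z ^ (n-s)`, of which Jacobi polynomials (with `c s` the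
product of the last `s` of the factors `β + 1, …, β + n`) and Laguerre polynomials (with `c s = 1`
and `z = 1`) are both instances up to normalisation. -/
noncomputable def binomialSum (n : ℕ) (α : ℝ) (c : ℕ → ℝ) (y z : ℝ) : ℝ :=
  ∑ s ∈ range (n + 1), ((∏ j ∈ Icc (s + 1) n, (α + (j : ℝ))) / ((n - s).factorial : ℝ)) *
    (c s / (s.factorial : ℝ)) * y ^ s * z ^ (n - s)

lemma binomialSum_mul_pow (n : ℕ) (α : ℝ) (c : ℕ → ℝ) (e y z : ℝ) :
    binomialSum n α (fun s => c s * e ^ s) y z = binomialSum n α c (e * y) z :=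
  sum_congr rfl fun s _ => by ring

lemma tendsto_binomialSum {ι : Type*} {l : Filter ι} {c : ι → ℕ → ℝ} {c' : ℕ → ℝ} {z : ι → ℝ}
    {z' : ℝ} {n : ℕ} (hc : ∀ s ≤ n, Tendsto (fun i => c i s) l (𝓝 (c' s)))
    (hz : Tendsto z l (𝓝 z')) (α y : ℝ) :
    Tendsto (fun i => binomialSum n α (c i) y (z i)) l (𝓝 (binomialSum n α c' y z')) :=
  tendsto_finsetSum _ fun s hs =>
    ((((hc s (mem_range_succ_iff.mp hs)).div_const _).const_mul _).mul_const _).mul (hz.pow _)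

lemma lagP_eq_binomialSum (n : ℕ) (α x : ℝ) :
    lagP n α x = (-1) ^ n * (n.factorial : ℝ) * binomialSum n α (fun _ => 1) (-x) 1 := by
  rw [lagP, binomialSum, mul_sum]
  refine sum_congr rfl fun s hs => ?_
  have hsign : (-1 : ℝ) ^ (n - s) = (-1) ^ n * (-1) ^ s := by
    rw [← pow_add, ← Nat.sub_add_cancel (mem_range_succ_iff.mp hs), Nat.add_sub_cancel, add_assoc,
      pow_add, Even.neg_one_pow ⟨s, rfl⟩, mul_one]
  rw [hsign, neg_pow x]
  ring

lemma jacP_one_sub_two_mul (n : ℕ) (α β y : ℝ) :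
    jacP n α β (1 - 2 * y) = 2 ^ n * (n.factorial : ℝ) / poch (n + α + β + 1) n *
      binomialSum n α (fun s => ∏ j ∈ Icc (n - s + 1) n, (β + (j : ℝ))) (-y) (1 - y) := by
  rw [jacP, binomialSum, show (1 - 2 * y - 1) / 2 = -y by ring,
    show (1 - 2 * y + 1) / 2 = 1 - y by ring]

lemma pow_mul_jacP_one_sub {t : ℝ} (ht : t ≠ 0) (n : ℕ) (α β x : ℝ) :
    t ^ n * jacP n α β (1 - 2 * x / t) =
      2 ^ n * (n.factorial : ℝ) / (poch (n + α + β + 1) n / t ^ n) *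
        binomialSum n α (fun s => (∏ j ∈ Icc (n - s + 1) n, (β + (j : ℝ))) / t ^ s)
          (-x) (1 - x / t) := by
  have hscale : -(x / t) = t⁻¹ * -x := by ring
  rw [mul_div_assoc, jacP_one_sub_two_mul, hscale, ← binomialSum_mul_pow]
  simp only [inv_pow, ← div_eq_mul_inv]
  field_simp

section JacobiToLaguerre

variable {ι : Type*} {l : Filter ι} {b t : ι → ℝ} {e : ℝ}

lemma tendsto_poch_div_pow (ht : Tendsto t l (cobounded ℝ))
    (hb : Tendsto (fun i => b i / t i) l (𝓝 e)) (n : ℕ) :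
    Tendsto (fun i => poch (b i) n / t i ^ n) l (𝓝 (e ^ n)) := by
  simpa only [poch, card_range] using
    tendsto_prod_add_div_pow_card ht hb (range n) (fun j => (j : ℝ))

theorem tendsto_pow_mul_jacP (ht : Tendsto t l (cobounded ℝ))
    (hb : Tendsto (fun i => b i / t i) l (𝓝 e)) (he : e ≠ 0) (n : ℕ) (α x : ℝ) :
    Tendsto (fun i => t i ^ n * jacP n α (b i) (1 - 2 * x / t i)) l
      (𝓝 ((-2 / e) ^ n * lagP n α (e * x))) := by
  have hpoch : Tendsto (fun i => poch (n + α + b i + 1) n / t i ^ n) l (𝓝 (e ^ n)) := by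
    refine tendsto_poch_div_pow ht ((tendsto_add_const_div ht hb (n + α + 1)).congr fun i => ?_) n
    ring
  have hcoeff : ∀ s ≤ n, Tendsto
      (fun i => (∏ j ∈ Icc (n - s + 1) n, (b i + (j : ℝ))) / t i ^ s) l (𝓝 (1 * e ^ s)) := by
    intro s hs
    have hcard : #(Icc (n - s + 1) n) = s := by rw [Nat.card_Icc]; omega
    simpa only [hcard, one_mul] using
      tendsto_prod_add_div_pow_card ht hb (Icc (n - s + 1) n) (fun j => (j : ℝ))
  have hlimit : (-2 / e) ^ n * lagP n α (e * x) =
      2 ^ n * (n.factorial : ℝ) / e ^ n * binomialSum n α (fun s => 1 * e ^ s) (-x) 1 := by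
    rw [lagP_eq_binomialSum, binomialSum_mul_pow, div_pow, neg_pow 2, mul_neg]
    have hsign : (-1 : ℝ) ^ n * (-1) ^ n = 1 := by rw [← mul_pow]; norm_num
    linear_combination (2 ^ n / e ^ n * n.factorial *
      binomialSum n α (fun _ => 1) (-(e * x)) 1) * hsign
  rw [hlimit]
  refine ((tendsto_const_nhds.div hpoch (pow_ne_zero n he)).mul
    (tendsto_binomialSum hcoeff (tendsto_one_sub_const_div ht x) α (-x))).congr' ?_
  filter_upwards [ht.eventually_ne_cobounded 0] with i hi
  exact (pow_mul_jacP_one_sub hi n α (b i) x).symm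

end JacobiToLaguerre

lemma tendsto_add_const_div_self (c : ℝ) :
    Tendsto (fun β : ℝ => (β + c) / β) (cobounded ℝ) (𝓝 1) := by
  refine tendsto_add_const_div tendsto_id (tendsto_const_nhds.congr' ?_) c
  filter_upwards [eventually_ne_cobounded 0] with β hβ
  exact (div_self hβ).symm

lemma tendsto_pow_mul_jacP_add_const (n : ℕ) (α c x : ℝ) :
    Tendsto (fun β : ℝ => β ^ n * jacP n α (β + c) (1 - 2 * x / β)) (cobounded ℝ)
      (𝓝 ((-2) ^ n * lagP n α x)) := by
  simpa using tendsto_pow_mul_jacP tendsto_id (tendsto_add_const_div_self c) one_ne_zero n α x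

lemma tendsto_pow_mul_jacP_neg_add_const (n : ℕ) (α c x : ℝ) :
    Tendsto (fun β : ℝ => β ^ n * jacP n α (-β + c) (1 - 2 * x / β)) (cobounded ℝ)
      (𝓝 (2 ^ n * lagP n α (-x))) := by
  have hratio : Tendsto (fun β : ℝ => (-β + c) / β) (cobounded ℝ) (𝓝 (-1)) :=
    (tendsto_add_const_div_self (-c)).neg.congr fun β => by ring
  simpa using tendsto_pow_mul_jacP tendsto_id hratio (by norm_num) n α x

lemma pow_mul_jacIII_one_sub {β : ℝ} (hβ : β ≠ 0) (m r : ℕ) (α x : ℝ) :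
    β ^ (m + 1 + r) * jacIII m (m + 1 + r) α β (1 - 2 * x / β) =
      ((β + (α + r - m)) / β)⁻¹ *
        ((β + (α + r)) / β * (β ^ m * jacP m (-α) (-β) (1 - 2 * x / β)) *
            (β ^ (r + 1) * jacP (r + 1) (α - 1) (β - 1) (1 - 2 * x / β)) +
          m * (4 * x * (1 - x / β)) *
            (β ^ (m - 1) * jacP (m - 1) (-α + 1) (-β + 1) (1 - 2 * x / β)) *
            (β ^ r * jacP r α β (1 - 2 * x / β))) := by
  have hdiff : m + 1 + r - m = r + 1 := by omega
  rw [jacIII, if_neg (by omega), hdiff, Nat.add_sub_cancel]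
  push_cast
  rw [show α + β + (m + 1 + r) - 2 * m - 1 = β + (α + r - m) by ring,
    show α + β + (m + 1 + r) - m - 1 = β + (α + r) by ring]
  generalize β + (α + r - m) = d
  cases m with
  | zero => simp only [Nat.cast_zero, zero_mul, add_zero]; field_simp; ring
  | succ m => rw [Nat.add_sub_cancel]; field_simp; ring

lemma neg_two_pow_mul_lagIII (m r : ℕ) (α x : ℝ) :
    (-2) ^ (m + 1 + r) * lagIII m (m + 1 + r) α x =
      2 ^ m * lagP m (-α) (-x) * ((-2) ^ (r + 1) * lagP (r + 1) (α - 1) x) +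
        m * (4 * x) * (2 ^ (m - 1) * lagP (m - 1) (-α + 1) (-x)) * ((-2) ^ r * lagP r α x) := by
  have hdiff : m + 1 + r - m = r + 1 := by omega
  have hsign : (-2 : ℝ) ^ (m + 1 + r) * (-1) ^ m = 2 ^ m * (-2) ^ (r + 1) := by
    rw [show m + 1 + r = m + (r + 1) by omega, pow_add, mul_right_comm, ← mul_pow]
    norm_num
  have hpow : (m : ℝ) * 2 ^ m = m * (2 * 2 ^ (m - 1)) := by
    cases m with
    | zero => simp
    | succ m => rw [Nat.add_sub_cancel, pow_succ']
  rw [lagIII, if_neg (by omega), hdiff, Nat.add_sub_cancel]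
  linear_combination
    (lagP m (-α) (-x) * lagP (r + 1) (α - 1) x
      - m * x * lagP (m - 1) (-α + 1) (-x) * lagP r α x) * hsign
    - ((-2) ^ (r + 1) * x * lagP (m - 1) (-α + 1) (-x) * lagP r α x) * hpow

theorem stmt2_general (m n : ℕ) (hn : m + 1 ≤ n) (α x : ℝ) :
    Tendsto (fun β : ℝ => β ^ n * jacIII m n α β (1 - 2 * x / β)) (cobounded ℝ)
      (𝓝 ((-2 : ℝ) ^ n * lagIII m n α x)) := by
  obtain ⟨r, rfl⟩ := Nat.exists_eq_add_of_le hn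
  have hden := (tendsto_add_const_div_self (α + r - m)).inv₀ one_ne_zero
  have hnum := tendsto_add_const_div_self (α + r)
  have hbase := tendsto_one_sub_const_div (t := fun β : ℝ => β) tendsto_id x
  have hjac_m := tendsto_pow_mul_jacP_neg_add_const m (-α) 0 x
  have hjac_r_succ := tendsto_pow_mul_jacP_add_const (r + 1) (α - 1) (-1) x
  have hjac_m_pred := tendsto_pow_mul_jacP_neg_add_const (m - 1) (-α + 1) 1 x
  have hjac_r := tendsto_pow_mul_jacP_add_const r α 0 x
  simp only [add_zero, ← sub_eq_add_neg] at hjac_m hjac_r_succ hjac_r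
  have hlimit := hden.mul (((hnum.mul hjac_m).mul hjac_r_succ).add
    ((((hbase.const_mul (4 * x)).const_mul (m : ℝ)).mul hjac_m_pred).mul hjac_r))
  rw [inv_one, one_mul, one_mul, mul_one, ← neg_two_pow_mul_lagIII] at hlimit
  refine hlimit.congr' ?_
  filter_upwards [eventually_ne_cobounded 0] with β hβ
  exact (pow_mul_jacIII_one_sub hβ m r α x).symm

theorem stmt2 (m n : ℕ) (hn : m + 1 ≤ n) (α x : ℝ) :
    Filter.Tendsto (fun β : ℝ => β ^ n * jacIII m n α β (1 - 2 * x / β)) Filter.atTop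
      (nhds ((-2 : ℝ) ^ n * lagIII m n α x)) := by
  exact (stmt2_general m n hn α x).mono_left IsOrderBornology.atTop_le_cobounded
end

section
/- For every integer m ≥ 1 and every x ∈ ℝ, Ĥ^{(III,2m)}_{2m+1}(x) = (−1)^m x L_m^{(1/2)}(−x²); equivalently, Ĥ^{(III,2m)}_{2m+1}(x) = (−1)^{m+1} i H_{2m+1}(ix), where H_{2m+1}(ix) is the monic Hermite polynomial evaluated at ix in ℂ. -/
open Finset Filter Topology

/-!
Since `H_0 = 1` and `H_1(x) = x`, the lowest polynomial `Ĥ^{(III,m)}_{m+1}(x)` of positive degree is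
`i^m (x H_m(ix) + i (m/2) H_{m-1}(ix))`, which is `-i^{m+1}` times the right-hand side of the
recurrence `H_{m+1}(z) = z H_m(z) - (m/2) H_{m-1}(z)` at `z = ix`. For even `m = 2p` the Laguerre
form follows by comparing coefficients in `H_{2p+1}(z) = z L_p^{(1/2)}(z²)`.
-/

/-- The `k`-th summand of the monic Hermite polynomial `H_n`. The falling factorial
`n (n - 1) ⋯ (n - 2k + 1)` replaces `n! / (n - 2k)!`, so that the summand vanishes for `n < 2k` and
the truncated exponent `n - 2 * k` never matters. -/
noncomputable def hermTerm (n k : ℕ) (z : ℂ) : ℂ :=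
  (-1 : ℂ) ^ k * ((n.descFactorial (2 * k) : ℂ) / ((k.factorial : ℂ) * 4 ^ k)) * z ^ (n - 2 * k)

theorem hermTerm_zero_right (n : ℕ) (z : ℂ) : hermTerm n 0 z = z ^ n := by
  simp [hermTerm]

theorem hermTerm_eq_zero_of_lt {n k : ℕ} (h : n < 2 * k) (z : ℂ) : hermTerm n k z = 0 := by
  simp [hermTerm, Nat.descFactorial_of_lt h]

theorem hermTerm_eq_of_two_mul_le {n k : ℕ} (h : 2 * k ≤ n) (z : ℂ) :
    hermTerm n k z =
      (-1 : ℂ) ^ k *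
        ((n.factorial : ℂ) / ((k.factorial : ℂ) * ((n - 2 * k).factorial : ℂ) * 4 ^ k)) *
        z ^ (n - 2 * k) := by
  have h_ne : ((n - 2 * k).factorial : ℂ) ≠ 0 := mod_cast Nat.factorial_ne_zero _
  rw [hermTerm, ← Nat.factorial_mul_descFactorial h]
  push_cast
  field_simp

theorem hermC_eq_sum_hermTerm {n N : ℕ} (h : n < 2 * N) (z : ℂ) :
    hermC n z = ∑ k ∈ range N, hermTerm n k z := by
  calc hermC n z = ∑ k ∈ range (n / 2 + 1), hermTerm n k z :=
        sum_congr rfl fun k hk ↦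
          (hermTerm_eq_of_two_mul_le (by have := mem_range.1 hk; omega) z).symm
    _ = ∑ k ∈ range N, hermTerm n k z :=
        sum_subset (range_subset_range.2 (by omega)) fun k _ hk ↦
          hermTerm_eq_zero_of_lt (by have := mt mem_range.2 hk; omega) z

theorem hermTerm_add_two_succ (n k : ℕ) (z : ℂ) :
    hermTerm (n + 2) (k + 1) z =
      z * hermTerm (n + 1) (k + 1) z - ((n : ℂ) + 1) / 2 * hermTerm n k z := by
  rcases lt_or_ge n (2 * k) with hlt | hle
  · simp [hermTerm_eq_zero_of_lt, hlt, show n + 2 < 2 * (k + 1) by omega,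
      show n + 1 < 2 * (k + 1) by omega]
  obtain ⟨r, rfl⟩ := Nat.exists_eq_add_of_le hle
  have h_add_two : (2 * k + r + 2).descFactorial (2 * (k + 1)) =
      (2 * k + r + 2) * ((2 * k + r + 1) * (2 * k + r).descFactorial (2 * k)) := by
    rw [mul_add_one, Nat.succ_descFactorial_succ, Nat.succ_descFactorial_succ]
  have h_add_one : (2 * k + r + 1).descFactorial (2 * (k + 1)) =
      (2 * k + r + 1) * (r * (2 * k + r).descFactorial (2 * k)) := by
    rw [mul_add_one, Nat.succ_descFactorial_succ, Nat.descFactorial_succ, Nat.add_sub_cancel_left]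
  have h_pow : (r : ℂ) * (z * z ^ (r - 1)) = r * z ^ r := by
    rcases r with _ | r
    · simp
    · rw [Nat.add_sub_cancel, pow_succ']
  have hk : (k : ℂ) + 1 ≠ 0 := Nat.cast_add_one_ne_zero k
  have hk_fact : (k.factorial : ℂ) ≠ 0 := mod_cast k.factorial_ne_zero
  simp only [hermTerm, h_add_two, h_add_one, Nat.factorial_succ,
    show 2 * k + r + 2 - 2 * (k + 1) = r by omega,
    show 2 * k + r + 1 - 2 * (k + 1) = r - 1 by omega, Nat.add_sub_cancel_left]
  push_cast
  field_simp
  linear_combination (-1 : ℂ) ^ k * 4 ^ k * 2 * (2 * k + r + 1) * h_pow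

theorem hermC_zero (z : ℂ) : hermC 0 z = 1 := by simp [hermC]

theorem hermC_one (z : ℂ) : hermC 1 z = z := by simp [hermC]

theorem hermC_add_two (n : ℕ) (z : ℂ) :
    hermC (n + 2) z = z * hermC (n + 1) z - ((n : ℂ) + 1) / 2 * hermC n z := by
  rw [hermC_eq_sum_hermTerm (N := n + 2) (by omega),
    hermC_eq_sum_hermTerm (n := n + 1) (N := n + 2) (by omega),
    hermC_eq_sum_hermTerm (n := n) (N := n + 1) (by omega),
    sum_range_succ' _ (n + 1), sum_range_succ' _ (n + 1)]
  simp only [hermTerm_add_two_succ, hermTerm_zero_right, sum_sub_distrib, ← mul_sum]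
  ring

-- For `n = 0` the value `hermC (0 - 1)` is multiplied by zero.
theorem hermC_succ (n : ℕ) (z : ℂ) :
    hermC (n + 1) z = z * hermC n z - (n : ℂ) / 2 * hermC (n - 1) z := by
  rcases n with _ | n
  · simp [hermC_zero, hermC_one]
  · exact mod_cast hermC_add_two n z

theorem hermIII_self_succ (m : ℕ) (x : ℝ) :
    hermIII m (m + 1) x = -Complex.I ^ (m + 1) * hermC (m + 1) (Complex.I * x) := by
  rw [hermIII, if_neg m.succ_ne_zero, Nat.add_sub_cancel_left, Nat.sub_self, hermC_one, hermC_zero,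
    hermC_succ m]
  linear_combination Complex.I ^ m * x * hermC m (Complex.I * x) * Complex.I_sq

-- Pair the factors: `(2 * j + 1) * (2 * j) = 4 * j * (1 / 2 + j)`.
theorem descFactorial_two_mul_add_one_two_mul (k d : ℕ) :
    ((2 * (k + d) + 1).descFactorial (2 * d) : ℝ) =
      4 ^ d * (k + d).descFactorial d * ∏ j ∈ Icc (k + 1) (k + d), (1 / 2 + (j : ℝ)) := by
  induction d with
  | zero => simp
  | succ d ih =>
    rw [show 2 * (k + (d + 1)) + 1 = 2 * (k + d) + 1 + 1 + 1 by ring, mul_add_one,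
      Nat.succ_descFactorial_succ, Nat.succ_descFactorial_succ, ← add_assoc k d 1,
      Nat.succ_descFactorial_succ, prod_Icc_succ_top (by omega)]
    push_cast
    rw [ih]
    ring

theorem lagP_eq_sum_descFactorial (n : ℕ) (α x : ℝ) :
    lagP n α x = ∑ k ∈ range (n + 1),
      (-1 : ℝ) ^ (n - k) * n.descFactorial (n - k) *
        ((∏ j ∈ Icc (k + 1) n, (α + (j : ℝ))) / (n - k).factorial) * x ^ k := by
  refine sum_congr rfl fun k hk ↦ ?_
  have hk_fact : (k.factorial : ℝ) ≠ 0 := mod_cast k.factorial_ne_zero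
  have h_fact := Nat.factorial_mul_descFactorial (Nat.sub_le n k)
  rw [Nat.sub_sub_self (mem_range_succ_iff.1 hk)] at h_fact
  rw [← h_fact, Nat.cast_mul, mul_div_cancel_left₀ _ hk_fact]

theorem hermC_two_mul_add_one_eq_mul_lagP (m : ℕ) {z : ℂ} {t : ℝ} (hz : z ^ 2 = t) :
    hermC (2 * m + 1) z = z * (lagP m (1 / 2) t : ℂ) := by
  rw [hermC_eq_sum_hermTerm (N := m + 1) (by omega), ← sum_range_reflect,
    lagP_eq_sum_descFactorial, Complex.ofReal_sum, mul_sum]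
  refine sum_congr rfl fun k hk ↦ ?_
  obtain ⟨d, rfl⟩ := Nat.exists_eq_add_of_le (mem_range_succ_iff.1 hk)
  have h_coeff := congrArg (fun r : ℝ ↦ (r : ℂ)) (descFactorial_two_mul_add_one_two_mul k d)
  have h_pow : z ^ (2 * k + 1) = z * (t : ℂ) ^ k := by rw [pow_succ', pow_mul, hz]
  have hd_fact : (d.factorial : ℂ) ≠ 0 := mod_cast d.factorial_ne_zero
  rw [show k + d + 1 - 1 - k = d by omega, Nat.add_sub_cancel_left, hermTerm,
    show 2 * (k + d) + 1 - 2 * d = 2 * k + 1 by omega, h_pow]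
  push_cast at h_coeff ⊢
  rw [h_coeff]
  field_simp

theorem stmt7 (m : ℕ) (hm : 1 ≤ m) (x : ℝ) :
    hermIII (2 * m) (2 * m + 1) x = (((-1 : ℝ) ^ m * x * lagP m (1 / 2) (-x ^ 2) : ℝ) : ℂ) ∧
      hermIII (2 * m) (2 * m + 1) x
        = (-1 : ℂ) ^ (m + 1) * Complex.I * hermC (2 * m + 1) (Complex.I * x) := by
  have h_herm : hermIII (2 * m) (2 * m + 1) x
      = (-1 : ℂ) ^ (m + 1) * Complex.I * hermC (2 * m + 1) (Complex.I * x) := by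
    rw [hermIII_self_succ, pow_succ Complex.I, pow_mul, Complex.I_sq]
    ring
  have h_sq : (Complex.I * x) ^ 2 = ((-x ^ 2 : ℝ) : ℂ) := by
    rw [mul_pow, Complex.I_sq]
    push_cast
    ring
  refine ⟨?_, h_herm⟩
  rw [h_herm, hermC_two_mul_add_one_eq_mul_lagP m h_sq]
  push_cast
  linear_combination (-1 : ℂ) ^ (m + 1) * x * (lagP m (1 / 2) (-x ^ 2) : ℂ) * Complex.I_sq
end
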